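/- Let p̄ = (p(1), p(2), …) satisfy 0 ≤ p(i) < 1 and ∏_{i=1}^∞ (1 − p(i)) > 0. Then for every first-order sentence ψ of the language L_≤, limsup_{n→∞} Prob(n,p̄;ψ) − liminf_{n→∞} Prob(n,p̄;ψ) < 1. -/

import Mathlib

open FirstOrder Filter

namespace RandomGraph

/-- The set of potential edges of a graph on `Fin n` (pairs `(v,w)` with `v < w`).
Vertex `v : Fin n` represents the number `v + 1` of the interval `[n] = {1, …, n}`. -/
abbrev EdgeIdx (n : ℕ) := {e : Fin n × Fin n // e.1 < e.2}

/-- An outcome of the random graph on `[n]`: a choice of which potential edges are present. -/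
abbrev Sample (n : ℕ) := EdgeIdx n → Bool

/-- Adjacency of two vertices (described by their values in `Fin n`) in the outcome `ω`. -/
def adjVal {n : ℕ} (ω : Sample n) (a b : ℕ) : Prop :=
  ∃ e : EdgeIdx n, ω e = true ∧
    ((e.1.1.val = a ∧ e.1.2.val = b) ∨ (e.1.1.val = b ∧ e.1.2.val = a))

/-- Adjacency of two vertices in the outcome `ω`. -/
def sampleAdj {n : ℕ} (ω : Sample n) (v w : Fin n) : Prop := adjVal ω v.val w.val

/-- The probability of the outcome `ω` in the model `G(n, p̄)`: each pair of distinct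
vertices at distance `d` is an edge with probability `p d`, independently.  (The value `p 0` is
never used, since distinct vertices are at distance at least 1.) -/
noncomputable def sampleWeight (p : ℕ → ℝ) {n : ℕ} (ω : Sample n) : ℝ :=
  ∏ e : EdgeIdx n,
    (if ω e then p (e.1.2.val - e.1.1.val) else 1 - p (e.1.2.val - e.1.1.val))

/-- The probability of the outcome `ω` in the circular model `C(n, p̄)`: vertices `v, w` are
adjacent with probability `p (min |v-w| (n - |v-w|))`, independently. -/
noncomputable def cWeight (p : ℕ → ℝ) {n : ℕ} (ω : Sample n) : ℝ :=
  ∏ e : EdgeIdx n,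
    (if ω e then p (min (e.1.2.val - e.1.1.val) (n - (e.1.2.val - e.1.1.val)))
      else 1 - p (min (e.1.2.val - e.1.1.val) (n - (e.1.2.val - e.1.1.val))))

open scoped Classical in
/-- The probability of the event `P` in the random graph `G(n, p̄)`. -/
noncomputable def Pr (p : ℕ → ℝ) (n : ℕ) (P : Sample n → Prop) : ℝ :=
  ∑ ω : Sample n, if P ω then sampleWeight p ω else 0

open scoped Classical in
/-- The probability of the event `P` in the circular random graph `C(n, p̄)`. -/
noncomputable def cPr (p : ℕ → ℝ) (n : ℕ) (P : Sample n → Prop) : ℝ :=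
  ∑ ω : Sample n, if P ω then cWeight p ω else 0

/-! ### The language `L` of graphs (also used as the language `L^c`) -/

/-- An outcome `ω` of the random graph, viewed as a structure of `FirstOrder.Language.graph`,
the language with a single binary adjacency predicate. -/
def graphStructure {n : ℕ} (ω : Sample n) : Language.graph.Structure (Fin n) where
  RelMap | .adj => fun x => sampleAdj ω (x 0) (x 1)

/-- Satisfaction of a sentence of the language `L` in the outcome `ω`. -/
def SatL {n : ℕ} (ω : Sample n) (ψ : Language.graph.Sentence) : Prop :=
  @Language.Sentence.Realize _ _ (graphStructure ω) ψ

/-- `Prob(n, p̄; ψ)` for a sentence `ψ` of the language `L`. -/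
noncomputable def ProbL (p : ℕ → ℝ) (n : ℕ) (ψ : Language.graph.Sentence) : ℝ :=
  Pr p n fun ω => SatL ω ψ

/-- The probability that `C(n, p̄)` satisfies a sentence `ψ` of the language `L^c = L`. -/
noncomputable def cProbL (p : ℕ → ℝ) (n : ℕ) (ψ : Language.graph.Sentence) : ℝ :=
  cPr p n fun ω => SatL ω ψ

/-! ### The language `L₊` -/

/-- The constants of the language `L₊`: the first element `1` and the last element `n`. -/
inductive plusFunc : ℕ → Type
  | one : plusFunc 0
  | last : plusFunc 0

/-- The relations of `L₊`: adjacency and successor. -/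
inductive plusRel : ℕ → Type
  | adj : plusRel 2
  | succ : plusRel 2

/-- The language `L₊` with adjacency, successor (`x = y + 1`), and constants `1` and `n`. -/
def Lplus : Language := ⟨plusFunc, plusRel⟩

/-- An outcome `ω` of the random graph on `[m+1]`, as an `L₊`-structure. -/
def plusStructure {m : ℕ} (ω : Sample (m + 1)) : Lplus.Structure (Fin (m + 1)) where
  funMap | .one => fun _ => 0 | .last => fun _ => Fin.last m
  RelMap
    | .adj => fun x => sampleAdj ω (x 0) (x 1)
    | .succ => fun x => (x 0).val = (x 1).val + 1

/-- `Prob(n, p̄; ψ)` for a sentence `ψ` of `L₊` (set to `0` in the irrelevant case `n = 0`,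
where the constants cannot be interpreted). -/
noncomputable def ProbPlus (p : ℕ → ℝ) : ℕ → Lplus.Sentence → ℝ
  | 0, _ => 0
  | (m + 1), ψ => Pr p (m + 1) fun ω => @Language.Sentence.Realize _ _ (plusStructure ω) ψ

/-! ### The language `L≤` -/

/-- The relations of `L≤`: adjacency and linear order. -/
inductive leRel : ℕ → Type
  | adj : leRel 2
  | le : leRel 2

/-- The language `L≤` with adjacency and a linear order. -/
def Lle : Language := ⟨fun _ => Empty, leRel⟩

/-- An outcome `ω` of the random graph on `[n]`, as an `L≤`-structure. -/
def leStructure {n : ℕ} (ω : Sample n) : Lle.Structure (Fin n) where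
  funMap := fun f _ => Empty.elim f
  RelMap
    | .adj => fun x => sampleAdj ω (x 0) (x 1)
    | .le => fun x => x 0 ≤ x 1

/-- Satisfaction of a sentence of `L≤` in the outcome `ω`. -/
def SatLe {n : ℕ} (ω : Sample n) (ψ : Lle.Sentence) : Prop :=
  @Language.Sentence.Realize _ _ (leStructure ω) ψ

/-- `Prob(n, p̄; ψ)` for a sentence `ψ` of `L≤`. -/
noncomputable def ProbLe (p : ℕ → ℝ) (n : ℕ) (ψ : Lle.Sentence) : ℝ :=
  Pr p n fun ω => SatLe ω ψ

/-! ### The circular languages `L₊^c` and `L≤^c` -/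

/-- The relations of `L₊^c`: adjacency and cyclic successor. -/
inductive plusCRel : ℕ → Type
  | adj : plusCRel 2
  | succ : plusCRel 2

/-- The language `L₊^c`, with adjacency and cyclic successor (`x = y + 1 (mod n)`). -/
def LplusC : Language := ⟨fun _ => Empty, plusCRel⟩

/-- An outcome `ω` of the circular random graph on `[n]`, as an `L₊^c`-structure. -/
def plusCStructure {n : ℕ} (ω : Sample n) : LplusC.Structure (Fin n) where
  funMap := fun f _ => Empty.elim f
  RelMap
    | .adj => fun x => sampleAdj ω (x 0) (x 1)
    | .succ => fun x => (x 0).val = ((x 1).val + 1) % n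

/-- The probability that `C(n, p̄)` satisfies a sentence `ψ` of the language `L₊^c`. -/
noncomputable def cProbPlus (p : ℕ → ℝ) (n : ℕ) (ψ : LplusC.Sentence) : ℝ :=
  cPr p n fun ω => @Language.Sentence.Realize _ _ (plusCStructure ω) ψ

/-- The relations of `L≤^c`: adjacency and the ternary clockwise-order predicate. -/
inductive cycRel : ℕ → Type
  | adj : cycRel 2
  | btw : cycRel 3

/-- The language `L≤^c`, with adjacency and the ternary clockwise-order predicate `C`. -/
def Lcyc : Language := ⟨fun _ => Empty, cycRel⟩

/-- `C(a, b, c)`: `a ≤ b ≤ c` holds after some cyclic permutation of `(a, b, c)`. -/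
def cyclicBtw {n : ℕ} (a b c : Fin n) : Prop :=
  (a ≤ b ∧ b ≤ c) ∨ (b ≤ c ∧ c ≤ a) ∨ (c ≤ a ∧ a ≤ b)

/-- An outcome `ω` of the circular random graph on `[n]`, as an `L≤^c`-structure. -/
def cycStructure {n : ℕ} (ω : Sample n) : Lcyc.Structure (Fin n) where
  funMap := fun f _ => Empty.elim f
  RelMap
    | .adj => fun x => sampleAdj ω (x 0) (x 1)
    | .btw => fun x => cyclicBtw (x 0) (x 1) (x 2)

/-- Satisfaction of a sentence of `L≤^c` in the outcome `ω`. -/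
def SatCyc {n : ℕ} (ω : Sample n) (ψ : Lcyc.Sentence) : Prop :=
  @Language.Sentence.Realize _ _ (cycStructure ω) ψ

/-- The probability that `C(n, p̄)` satisfies a sentence `ψ` of the language `L≤^c`. -/
noncomputable def cProbCyc (p : ℕ → ℝ) (n : ℕ) (ψ : Lcyc.Sentence) : ℝ :=
  cPr p n fun ω => SatCyc ω ψ


/-! ### Ordered graphs and the Ehrenfeucht–Fraïssé game -/

/-- A set with two binary relations. -/
structure OG where
  V : Type
  le : V → V → Prop
  adj : V → V → Prop

/-- A relation between two structures preserving atomic formulas. -/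
def Atom {M N : OG} (R : Set (M.V × N.V)) : Prop :=
  ∀ p ∈ R, ∀ q ∈ R, (p.1 = q.1 ↔ p.2 = q.2) ∧ (M.le p.1 q.1 ↔ N.le p.2 q.2) ∧
    (M.adj p.1 q.1 ↔ N.adj p.2 q.2)

/-- Duplicator wins the `k`-round game from position `R`. -/
def EF (M N : OG) : ℕ → Set (M.V × N.V) → Prop
  | 0, R => Atom R
  | k + 1, R => Atom R ∧ (∀ x, ∃ y, EF M N k (insert (x, y) R)) ∧
      (∀ y, ∃ x, EF M N k (insert (x, y) R))

theorem EF.atom {M N : OG} {k : ℕ} {R : Set (M.V × N.V)} (h : EF M N k R) : Atom R := by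
  cases k with
  | zero => exact h
  | succ k => exact h.1

theorem Atom.anti {M N : OG} {R S : Set (M.V × N.V)} (h : Atom R) (hs : S ⊆ R) : Atom S :=
  fun p hp q hq => h p (hs hp) q (hs hq)

theorem EF.anti {M N : OG} {k : ℕ} : ∀ {R S : Set (M.V × N.V)}, EF M N k R → S ⊆ R →
    EF M N k S := by
  induction k with
  | zero => intro R S h hs; exact Atom.anti h hs
  | succ k ih =>
    intro R S h hs
    refine ⟨h.1.anti hs, fun x => ?_, fun y => ?_⟩
    · obtain ⟨y, hy⟩ := h.2.1 x
      exact ⟨y, ih hy (Set.insert_subset_insert hs)⟩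
    · obtain ⟨x, hx⟩ := h.2.2 y
      exact ⟨x, ih hx (Set.insert_subset_insert hs)⟩

theorem EF.pred {M N : OG} {k : ℕ} : ∀ {R : Set (M.V × N.V)}, EF M N (k + 1) R →
    EF M N k R := by
  induction k with
  | zero => intro R h; exact h.1
  | succ k ih =>
    intro R h
    refine ⟨h.1, fun x => ?_, fun y => ?_⟩
    · obtain ⟨y, hy⟩ := h.2.1 x
      exact ⟨y, ih hy⟩
    · obtain ⟨x, hx⟩ := h.2.2 y
      exact ⟨x, ih hx⟩

theorem EF.mono {M N : OG} {k l : ℕ} (hkl : k ≤ l) {R : Set (M.V × N.V)} (h : EF M N l R) :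
    EF M N k R := by
  induction l, hkl using Nat.le_induction with
  | base => exact h
  | succ l _ ih => exact ih h.pred

theorem EF.symm {M N : OG} {k : ℕ} : ∀ {R : Set (M.V × N.V)}, EF M N k R →
    EF N M k {p | (p.2, p.1) ∈ R} := by
  have hat : ∀ {R : Set (M.V × N.V)}, Atom R → Atom (M := N) (N := M) {p | (p.2, p.1) ∈ R} := by
    intro R h p hp q hq
    have := h _ hp _ hq
    exact ⟨this.1.symm, this.2.1.symm, this.2.2.symm⟩
  induction k with
  | zero => intro R h; exact hat h
  | succ k ih =>
    intro R h
    refine ⟨hat h.1, fun y => ?_, fun x => ?_⟩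
    · obtain ⟨x, hx⟩ := h.2.2 y
      refine ⟨x, (ih hx).anti ?_⟩
      rintro ⟨u, v⟩ (hp | hp)
      · left; simp only [Prod.mk.injEq] at hp ⊢; exact ⟨hp.2, hp.1⟩
      · right; exact hp
    · obtain ⟨y, hy⟩ := h.2.1 x
      refine ⟨y, (ih hy).anti ?_⟩
      rintro ⟨u, v⟩ (hp | hp)
      · left; simp only [Prod.mk.injEq] at hp ⊢; exact ⟨hp.2, hp.1⟩
      · right; exact hp

theorem EF.trans {M N P : OG} {k : ℕ} : ∀ {R : Set (M.V × N.V)} {S : Set (N.V × P.V)},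
    EF M N k R → EF N P k S →
    EF M P k {p | ∃ y, (p.1, y) ∈ R ∧ (y, p.2) ∈ S} := by
  have hat : ∀ {R : Set (M.V × N.V)} {S : Set (N.V × P.V)}, Atom R → Atom S →
      Atom (M := M) (N := P) {p | ∃ y, (p.1, y) ∈ R ∧ (y, p.2) ∈ S} := by
    rintro R S h h' p ⟨y, hp, hp'⟩ q ⟨z, hq, hq'⟩
    have h1 := h _ hp _ hq
    have h2 := h' _ hp' _ hq'
    exact ⟨h1.1.trans h2.1, h1.2.1.trans h2.2.1, h1.2.2.trans h2.2.2⟩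
  induction k with
  | zero => intro R S h h'; exact hat h h'
  | succ k ih =>
    intro R S h h'
    have key : ∀ x y z, ∀ R : Set (M.V × N.V), ∀ S : Set (N.V × P.V),
        insert (x, z) {p : M.V × P.V | ∃ y, (p.1, y) ∈ R ∧ (y, p.2) ∈ S} ⊆
        {p | ∃ w, (p.1, w) ∈ insert (x, y) R ∧ (w, p.2) ∈ insert (y, z) S} := by
      rintro x y z R S ⟨u, v⟩ (hp | ⟨w, hw, hw'⟩)
      · simp only [Prod.mk.injEq] at hp
        obtain ⟨rfl, rfl⟩ := hp
        exact ⟨y, Or.inl rfl, Or.inl rfl⟩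
      · exact ⟨w, Or.inr hw, Or.inr hw'⟩
    refine ⟨hat h.1 h'.1, fun x => ?_, fun z => ?_⟩
    · obtain ⟨y, hy⟩ := h.2.1 x
      obtain ⟨z, hz⟩ := h'.2.1 y
      exact ⟨z, (ih hy hz).anti (key x y z R S)⟩
    · obtain ⟨y, hy⟩ := h'.2.2 z
      obtain ⟨x, hx⟩ := h.2.2 y
      exact ⟨x, (ih hx hy).anti (key x y z R S)⟩

/-- Isomorphisms. -/
def IsIso {M N : OG} (f : M.V ≃ N.V) : Prop :=
  ∀ x y, (M.le x y ↔ N.le (f x) (f y)) ∧ (M.adj x y ↔ N.adj (f x) (f y))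

theorem IsIso.ef {M N : OG} {f : M.V ≃ N.V} (hf : IsIso f) (k : ℕ) :
    EF M N k {p | f p.1 = p.2} := by
  have hat : Atom (M := M) (N := N) {p | f p.1 = p.2} := by
    rintro ⟨x, y⟩ hp ⟨z, w⟩ hq
    simp only [Set.mem_ofPred_eq] at hp hq
    subst hp hq
    exact ⟨f.injective.eq_iff.symm, (hf x z).1, (hf x z).2⟩
  induction k with
  | zero => exact hat
  | succ k ih =>
    refine ⟨hat, fun x => ⟨f x, ?_⟩, fun y => ⟨f.symm y, ?_⟩⟩
    · rwa [Set.insert_eq_of_mem (by simp)]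
    · rwa [Set.insert_eq_of_mem (by simp)]

theorem IsIso.symm {M N : OG} {f : M.V ≃ N.V} (hf : IsIso f) :
    IsIso (M := N) (N := M) f.symm := by
  intro x y
  have := hf (f.symm x) (f.symm y)
  simp only [Equiv.apply_symm_apply] at this
  exact ⟨this.1.symm, this.2.symm⟩

theorem IsIso.trans {M N P : OG} {f : M.V ≃ N.V} {g : N.V ≃ P.V} (hf : IsIso f)
    (hg : IsIso g) : IsIso (M := M) (N := P) (f.trans g) := fun x y =>
  ⟨(hf x y).1.trans (hg _ _).1, (hf x y).2.trans (hg _ _).2⟩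

theorem isIso_refl (M : OG) : IsIso (M := M) (N := M) (Equiv.refl _) :=
  fun _ _ => ⟨Iff.rfl, Iff.rfl⟩

/-- The ordered sum, without edges between the two parts. -/
def OG.sum (M N : OG) : OG where
  V := M.V ⊕ N.V
  le
    | .inl x, .inl y => M.le x y
    | .inl _, .inr _ => True
    | .inr _, .inl _ => False
    | .inr x, .inr y => N.le x y
  adj
    | .inl x, .inl y => M.adj x y
    | .inl _, .inr _ => False
    | .inr _, .inl _ => False
    | .inr x, .inr y => N.adj x y

/-- The relation on the sums. -/
def sumRel {M N M' N' : OG} (R : Set (M.V × M'.V)) (S : Set (N.V × N'.V)) :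
    Set ((M.sum N).V × (M'.sum N').V) :=
  {p | (∃ x y, (x, y) ∈ R ∧ p = (.inl x, .inl y)) ∨ (∃ x y, (x, y) ∈ S ∧ p = (.inr x, .inr y))}

theorem sumRel_insert_left {M N M' N' : OG} (R : Set (M.V × M'.V)) (S : Set (N.V × N'.V)) (x y) :
    insert (.inl x, .inl y) (sumRel R S) ⊆ sumRel (insert (x, y) R) S := by
  rintro p (rfl | ⟨u, v, h, rfl⟩ | ⟨u, v, h, rfl⟩)
  · exact Or.inl ⟨x, y, Or.inl rfl, rfl⟩
  · exact Or.inl ⟨u, v, Or.inr h, rfl⟩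
  · exact Or.inr ⟨u, v, h, rfl⟩

theorem sumRel_insert_right {M N M' N' : OG} (R : Set (M.V × M'.V)) (S : Set (N.V × N'.V)) (x y) :
    insert (.inr x, .inr y) (sumRel R S) ⊆ sumRel R (insert (x, y) S) := by
  rintro p (rfl | ⟨u, v, h, rfl⟩ | ⟨u, v, h, rfl⟩)
  · exact Or.inr ⟨x, y, Or.inl rfl, rfl⟩
  · exact Or.inl ⟨u, v, h, rfl⟩
  · exact Or.inr ⟨u, v, Or.inr h, rfl⟩

theorem sumRel_atom {M N M' N' : OG} {R : Set (M.V × M'.V)} {S : Set (N.V × N'.V)}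
    (hR : Atom R) (hS : Atom S) : Atom (sumRel R S) := by
  rintro p (⟨x, y, h, rfl⟩ | ⟨x, y, h, rfl⟩) q (⟨z, w, h', rfl⟩ | ⟨z, w, h', rfl⟩)
  · have := hR _ h _ h'
    exact ⟨Sum.inl_injective.eq_iff.trans (this.1.trans Sum.inl_injective.eq_iff.symm), this.2.1, this.2.2⟩
  · exact ⟨by simp, Iff.rfl, Iff.rfl⟩
  · exact ⟨by simp, Iff.rfl, Iff.rfl⟩
  · have := hS _ h _ h'
    exact ⟨Sum.inr_injective.eq_iff.trans (this.1.trans Sum.inr_injective.eq_iff.symm), this.2.1, this.2.2⟩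

theorem EF.sum {M N M' N' : OG} {k : ℕ} : ∀ {R : Set (M.V × M'.V)} {S : Set (N.V × N'.V)},
    EF M M' k R → EF N N' k S → EF (M.sum N) (M'.sum N') k (sumRel R S) := by
  induction k with
  | zero => intro R S hR hS; exact sumRel_atom hR hS
  | succ k ih =>
    intro R S hR hS
    refine ⟨sumRel_atom hR.1 hS.1, ?_, ?_⟩
    · rintro (x | x)
      · obtain ⟨y, hy⟩ := hR.2.1 x
        exact ⟨.inl y, (ih hy hS.pred).anti (sumRel_insert_left R S x y)⟩
      · obtain ⟨y, hy⟩ := hS.2.1 x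
        exact ⟨.inr y, (ih hR.pred hy).anti (sumRel_insert_right R S x y)⟩
    · rintro (y | y)
      · obtain ⟨x, hx⟩ := hR.2.2 y
        exact ⟨.inl x, (ih hx hS.pred).anti (sumRel_insert_left R S x y)⟩
      · obtain ⟨x, hx⟩ := hS.2.2 y
        exact ⟨.inr x, (ih hR.pred hx).anti (sumRel_insert_right R S x y)⟩

/-- The empty structure. -/
def OG.zero : OG := ⟨Empty, fun _ _ => True, fun _ _ => False⟩

theorem isIso_assoc (M N P : OG) :
    IsIso (M := (M.sum N).sum P) (N := M.sum (N.sum P)) (Equiv.sumAssoc M.V N.V P.V) := by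
  rintro ((x | x) | x) ((y | y) | y) <;> exact ⟨Iff.rfl, Iff.rfl⟩

theorem isIso_sum_zero (M : OG) :
    IsIso (M := M.sum OG.zero) (N := M) (Equiv.sumEmpty M.V Empty) := by
  rintro (x | ⟨⟨⟩⟩) (y | ⟨⟨⟩⟩)
  exact ⟨Iff.rfl, Iff.rfl⟩

theorem isIso_zero_sum (M : OG) :
    IsIso (M := OG.zero.sum M) (N := M) (Equiv.emptySum Empty M.V) := by
  rintro (⟨⟨⟩⟩ | x) (⟨⟨⟩⟩ | y)
  exact ⟨Iff.rfl, Iff.rfl⟩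

theorem isIso_sumCongr {M N M' N' : OG} {f : M.V ≃ M'.V} {g : N.V ≃ N'.V} (hf : IsIso f)
    (hg : IsIso g) : IsIso (M := M.sum N) (N := M'.sum N') (Equiv.sumCongr f g) := by
  rintro (x | x) (y | y)
  · exact hf x y
  · exact ⟨Iff.rfl, Iff.rfl⟩
  · exact ⟨Iff.rfl, Iff.rfl⟩
  · exact hg x y

/-- The equivalence relation of `k`-equivalence. -/
def efSetoid (k : ℕ) : Setoid OG where
  r M N := EF M N k ∅
  iseqv := {
    refl := fun M => ((isIso_refl M).ef k).anti (Set.empty_subset _)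
    symm := fun h => (EF.symm h).anti (Set.empty_subset _)
    trans := fun h h' => (EF.trans h h').anti (Set.empty_subset _) }

/-- Classes of `k`-equivalence. -/
def Cls (k : ℕ) : Type 1 := Quotient (efSetoid k)

/-- The class. -/
def cls (k : ℕ) (M : OG) : Cls k := Quotient.mk (efSetoid k) M

theorem cls_eq {k : ℕ} {M N : OG} : cls k M = cls k N ↔ EF M N k ∅ :=
  Quotient.eq (r := efSetoid k)

theorem IsIso.cls_eq {k : ℕ} {M N : OG} {f : M.V ≃ N.V} (hf : IsIso f) : cls k M = cls k N :=
  RandomGraph.cls_eq.2 ((hf.ef k).anti (Set.empty_subset _))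

theorem sum_congr_ef {k : ℕ} {M N M' N' : OG} (h : EF M M' k ∅) (h' : EF N N' k ∅) :
    EF (M.sum N) (M'.sum N') k ∅ := (EF.sum h h').anti (Set.empty_subset _)

noncomputable instance (k : ℕ) : Monoid (Cls k) where
  mul := Quotient.map₂ OG.sum (fun _ _ h _ _ h' => sum_congr_ef h h')
  one := cls k OG.zero
  mul_assoc := by
    rintro ⟨M⟩ ⟨N⟩ ⟨P⟩
    exact (isIso_assoc M N P).cls_eq
  one_mul := by
    rintro ⟨M⟩
    exact (isIso_zero_sum M).cls_eq
  mul_one := by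
    rintro ⟨M⟩
    exact (isIso_sum_zero M).cls_eq

theorem cls_sum (k : ℕ) (M N : OG) : cls k (M.sum N) = cls k M * cls k N := rfl

theorem cls_zero (k : ℕ) : cls k OG.zero = 1 := rfl

/-! Finiteness -/

/-- Hash values. -/
def HT : ℕ → ℕ → Type
  | 0, r => Fin r → Fin r → Prop × Prop × Prop
  | k + 1, r => (Fin r → Fin r → Prop × Prop × Prop) × Set (HT k (r + 1))

theorem HT_finite (k : ℕ) : ∀ r, Finite (HT k r) := by
  induction k with
  | zero => intro r; unfold HT; infer_instance
  | succ k ih => intro r; have := ih (r + 1); unfold HT; infer_instance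

/-- The atomic diagram. -/
def diag (M : OG) {r : ℕ} (a : Fin r → M.V) : Fin r → Fin r → Prop × Prop × Prop :=
  fun i j => (a i = a j, M.le (a i) (a j), M.adj (a i) (a j))

/-- The hash of a tuple. -/
def hash (M : OG) : (k : ℕ) → {r : ℕ} → (Fin r → M.V) → HT k r
  | 0, _, a => diag M a
  | k + 1, r, a => (diag M a, Set.range fun x => hash M k (Fin.cons x a : Fin (r + 1) → M.V))

theorem diag_atom {M N : OG} {r : ℕ} {a : Fin r → M.V} {b : Fin r → N.V}
    (h : diag M a = diag N b) : Atom (Set.range fun i => (a i, b i)) := by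
  rintro _ ⟨i, rfl⟩ _ ⟨j, rfl⟩
  have := congrFun (congrFun h i) j
  simp only [diag, Prod.mk.injEq] at this
  exact ⟨iff_of_eq this.1, iff_of_eq this.2.1, iff_of_eq this.2.2⟩

theorem insert_range_cons {α β : Type} {r : ℕ} (a : Fin r → α) (b : Fin r → β) (x : α) (y : β) :
    insert (x, y) (Set.range fun i => (a i, b i)) ⊆
    Set.range fun i : Fin (r + 1) =>
      ((Fin.cons x a : Fin (r + 1) → α) i, (Fin.cons y b : Fin (r + 1) → β) i) := by
  rintro p (rfl | ⟨i, rfl⟩)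
  · exact ⟨0, rfl⟩
  · exact ⟨i.succ, rfl⟩

theorem hash_ef {M N : OG} (k : ℕ) : ∀ {r : ℕ} {a : Fin r → M.V} {b : Fin r → N.V},
    hash M k a = hash N k b → EF M N k (Set.range fun i => (a i, b i)) := by
  induction k with
  | zero => intro r a b h; exact diag_atom h
  | succ k ih =>
    intro r a b h
    have h1 := congrArg Prod.fst h
    have h2 := congrArg Prod.snd h
    simp only [hash] at h1 h2
    refine ⟨diag_atom h1, fun x => ?_, fun y => ?_⟩
    · have : hash M k (Fin.cons x a : Fin (r + 1) → M.V) ∈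
        Set.range fun y => hash N k (Fin.cons y b : Fin (r + 1) → N.V) := h2 ▸ ⟨x, rfl⟩
      obtain ⟨y, hy⟩ := this
      exact ⟨y, (ih hy.symm).anti (insert_range_cons a b x y)⟩
    · have : hash N k (Fin.cons y b : Fin (r + 1) → N.V) ∈
        Set.range fun x => hash M k (Fin.cons x a : Fin (r + 1) → M.V) := h2 ▸ ⟨y, rfl⟩
      obtain ⟨x, hx⟩ := this
      exact ⟨x, (ih hx).anti (insert_range_cons a b x y)⟩

instance Cls_finite (k : ℕ) : Finite (Cls k) := by
  have := HT_finite k 0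
  refine Finite.of_injective (β := HT k 0)
    (fun c => hash (Quotient.out (s := efSetoid k) c) k Fin.elim0) ?_
  intro c d h
  have := (hash_ef k h).anti (Set.empty_subset _)
  have h2 := cls_eq.2 this
  exact (Quotient.out_eq (s := efSetoid k) c).symm.trans
    (h2.trans (Quotient.out_eq (s := efSetoid k) d))

/-! Aperiodicity -/

/-- Powers. -/
def pw (M : OG) : ℕ → OG
  | 0 => OG.zero
  | n + 1 => (pw M n).sum M

theorem cls_pw (k : ℕ) (M : OG) (n : ℕ) : cls k (pw M n) = cls k M ^ n := by
  induction n with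
  | zero => rfl
  | succ n ih => rw [pow_succ, ← ih]; rfl

theorem pw_split (M : OG) (i j : ℕ) :
    ∃ f : (pw M (i + 1 + j)).V ≃ (((pw M i).sum M).sum (pw M j)).V,
      IsIso (M := pw M (i + 1 + j)) (N := ((pw M i).sum M).sum (pw M j)) f := by
  induction j with
  | zero => exact ⟨_, (isIso_sum_zero _).symm⟩
  | succ j ih =>
    obtain ⟨f, hf⟩ := ih
    exact ⟨_, (isIso_sumCongr hf (isIso_refl M)).trans (isIso_assoc _ _ _)⟩

theorem pw_split_at (M : OG) (n : ℕ) : ∀ x : (pw M n).V, ∃ i j, i + 1 + j = n ∧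
    ∃ f : (pw M n).V ≃ (((pw M i).sum M).sum (pw M j)).V,
      IsIso (M := pw M n) (N := ((pw M i).sum M).sum (pw M j)) f ∧
      ∃ v : M.V, f x = .inl (.inr v) := by
  induction n with
  | zero => rintro ⟨⟩
  | succ n ih =>
    rintro (x | x)
    · obtain ⟨i, j, hij, f, hf, v, hv⟩ := ih x
      refine ⟨i, j + 1, by omega, _,
        (isIso_sumCongr hf (isIso_refl M)).trans (isIso_assoc _ _ _), v, ?_⟩
      change Equiv.sumAssoc _ _ _ (Sum.inl (f x)) = _
      rw [hv]
      rfl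
    · exact ⟨n, 0, by omega, _, (isIso_sum_zero _).symm, x, rfl⟩

theorem pw_ef (M : OG) (k : ℕ) : ∀ N N' : ℕ, (N = N' ∨ 2 ^ k ≤ N + 1 ∧ 2 ^ k ≤ N' + 1) →
    EF (pw M N) (pw M N') k ∅ := by
  induction k with
  | zero => intro N N' _ p hp; exact hp.elim
  | succ k ih =>
    have forth : ∀ N N' : ℕ, (N = N' ∨ 2 ^ (k + 1) ≤ N + 1 ∧ 2 ^ (k + 1) ≤ N' + 1) →
        ∀ x, ∃ y, EF (pw M N) (pw M N') k {(x, y)} := by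
      intro N N' h x
      obtain ⟨i, j, hij, f, hf, v, hv⟩ := pw_split_at M N x
      have hc : ∃ i' j', i' + 1 + j' = N' ∧ (i = i' ∨ 2 ^ k ≤ i + 1 ∧ 2 ^ k ≤ i' + 1) ∧
          (j = j' ∨ 2 ^ k ≤ j + 1 ∧ 2 ^ k ≤ j' + 1) := by
        have hpos : 0 < 2 ^ k := by positivity
        rw [pow_succ] at h
        generalize 2 ^ k = t at *
        rcases h with h | h
        · exact ⟨i, j, by omega, Or.inl rfl, Or.inl rfl⟩
        · by_cases h1 : i + 1 < t
          · exact ⟨i, N' - 1 - i, by omega, by omega, by omega⟩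
          · by_cases h2 : j + 1 < t
            · exact ⟨N' - 1 - j, j, by omega, by omega, by omega⟩
            · exact ⟨t - 1, N' - t, by omega, by omega, by omega⟩
      obtain ⟨i', j', hij', hi, hj⟩ := hc
      subst hij'
      obtain ⟨g, hg⟩ := pw_split M i' j'
      have e1 := EF.sum (EF.sum (ih i i' hi) ((isIso_refl M).ef k)) (ih j j' hj)
      have e2 := EF.trans (EF.trans (hf.ef k) e1) (hg.symm.ef k)
      refine ⟨g.symm (.inl (.inr v)), e2.anti ?_⟩
      rintro _ rfl
      refine ⟨.inl (.inr v), ⟨.inl (.inr v), hv, ?_⟩, rfl⟩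
      exact Or.inl ⟨_, _, Or.inr ⟨v, v, rfl, rfl⟩, rfl⟩
    intro N N' h
    refine ⟨fun p hp => hp.elim, fun x => ?_, fun y => ?_⟩
    · obtain ⟨y, hy⟩ := forth N N' h x
      exact ⟨y, hy.anti (by simp)⟩
    · obtain ⟨x, hx⟩ := forth N' N (by omega) y
      refine ⟨x, hx.symm.anti ?_⟩
      rintro p (rfl | hp)
      · rfl
      · exact hp.elim

theorem Cls_aper (k : ℕ) (c : Cls k) : c ^ (2 ^ k + 1) = c ^ (2 ^ k) := by
  obtain ⟨M, rfl⟩ := Quotient.exists_rep c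
  change cls k M ^ _ = cls k M ^ _
  rw [← cls_pw, ← cls_pw, cls_eq]
  exact pw_ef M k _ _ (by omega)

/-- In a finite aperiodic monoid there is `z` with `z t z = z` for all `t`. -/
theorem exists_rect {S : Type*} [Monoid S] [Finite S] (n : ℕ)
    (hn : ∀ x : S, x ^ (n + 1) = x ^ n) : ∃ z : S, ∀ t, z * t * z = z := by
  let I : S → Set S := fun z => {x | ∃ u v, x = u * z * v}
  obtain ⟨z, hz⟩ := Finite.exists_min (fun z => (I z).ncard)
  refine ⟨z, fun t => ?_⟩
  have hsub : I (z * t * z) ⊆ I z := by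
    rintro x ⟨u, v, rfl⟩
    exact ⟨u * z * t, v, by simp only [mul_assoc]⟩
  have heq : I (z * t * z) = I z := Set.eq_of_subset_of_ncard_le hsub (hz _) (Set.toFinite _)
  have hmem : z ∈ I (z * t * z) := heq ▸ ⟨1, 1, by simp⟩
  obtain ⟨u, v, huv⟩ := hmem
  have iter : ∀ a b : S, z = a * z * b → ∀ m : ℕ, z = a ^ m * z * b ^ m := by
    intro a b h m
    induction m with
    | zero => simp
    | succ m ih =>
      calc z = a ^ m * z * b ^ m := ih
        _ = a ^ m * (a * z * b) * b ^ m := by rw [← h]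
        _ = a ^ (m + 1) * z * b ^ (m + 1) := by
          rw [pow_succ a, pow_succ' b]; simp only [mul_assoc]
  have hv : z * v = z := by
    have h := iter (u * z * t) v (by simp only [mul_assoc] at huv ⊢; exact huv) n
    calc z * v = (u * z * t) ^ n * z * v ^ n * v := by rw [← h]
      _ = (u * z * t) ^ n * z * v ^ (n + 1) := by rw [pow_succ]; simp only [mul_assoc]
      _ = z := by rw [hn, ← h]
  have hu : u * z = z := by
    have h := iter u (t * z * v) (by simp only [mul_assoc] at huv ⊢; exact huv) n
    calc u * z = u * (u ^ n * z * (t * z * v) ^ n) := by rw [← h]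
      _ = u ^ (n + 1) * z * (t * z * v) ^ n := by rw [pow_succ']; simp only [mul_assoc]
      _ = z := by rw [hn, ← h]
  calc z * t * z = u * z * t * (z * v) := by rw [hu, hv]
    _ = u * (z * t * z) * v := by simp only [mul_assoc]
    _ = z := huv.symm

/-! Formulas -/

/-- The first-order structure. -/
def OG.str (M : OG) : Lle.Structure M.V where
  funMap := fun f _ => Empty.elim f
  RelMap
    | .adj => fun x => M.adj (x 0) (x 1)
    | .le => fun x => M.le (x 0) (x 1)

theorem term_var {n : ℕ} (t : Lle.Term (Empty ⊕ Fin n)) : ∃ i, t = Language.Term.var (Sum.inr i) := by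
  rcases t with (⟨⟨⟩⟩ | i) | ⟨f, _⟩
  · exact ⟨i, rfl⟩
  · exact Empty.elim f

theorem formula_ef {n : ℕ} (φ : Lle.BoundedFormula Empty n) : ∃ k, ∀ (M N : OG) (v : Empty → M.V) (w : Empty → N.V)
    (a : Fin n → M.V) (b : Fin n → N.V), EF M N k (Set.range fun i => (a i, b i)) →
    ((@Language.BoundedFormula.Realize Lle M.V M.str Empty n φ v a) ↔
     (@Language.BoundedFormula.Realize Lle N.V N.str Empty n φ w b)) := by
  induction φ with
  | falsum => exact ⟨0, fun M N v w a b _ => Iff.rfl⟩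
  | equal t s =>
    refine ⟨0, fun M N v w a b h => ?_⟩
    obtain ⟨i, rfl⟩ := term_var t
    obtain ⟨j, rfl⟩ := term_var s
    exact (h _ ⟨i, rfl⟩ _ ⟨j, rfl⟩).1
  | rel R ts =>
    refine ⟨0, fun M N v w a b h => ?_⟩
    cases R with
    | adj =>
      obtain ⟨i, hi⟩ := term_var (ts 0)
      obtain ⟨j, hj⟩ := term_var (ts 1)
      have := (h _ ⟨i, rfl⟩ _ ⟨j, rfl⟩).2.2
      have ht : ts = ![Language.Term.var (Sum.inr i), Language.Term.var (Sum.inr j)] := by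
        funext l
        fin_cases l
        · exact hi
        · exact hj
      subst ht
      exact this
    | le =>
      obtain ⟨i, hi⟩ := term_var (ts 0)
      obtain ⟨j, hj⟩ := term_var (ts 1)
      have := (h _ ⟨i, rfl⟩ _ ⟨j, rfl⟩).2.1
      have ht : ts = ![Language.Term.var (Sum.inr i), Language.Term.var (Sum.inr j)] := by
        funext l
        fin_cases l
        · exact hi
        · exact hj
      subst ht
      exact this
  | imp f g ihf ihg =>
    obtain ⟨k, hk⟩ := ihf
    obtain ⟨l, hl⟩ := ihg
    refine ⟨max k l, fun M N v w a b h => ?_⟩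
    have h1 := hk M N v w a b (h.mono (le_max_left _ _))
    have h2 := hl M N v w a b (h.mono (le_max_right _ _))
    exact imp_congr h1 h2
  | @all n f ih =>
    obtain ⟨k, hk⟩ := ih
    refine ⟨k + 1, fun M N v w a b h => ?_⟩
    have key : ∀ x y, (Set.range fun i : Fin (n + 1) =>
      ((Fin.snoc a x : Fin (n + 1) → M.V) i, (Fin.snoc b y : Fin (n + 1) → N.V) i)) ⊆
        insert (x, y) (Set.range fun i => (a i, b i)) := by
      rintro x y _ ⟨i, rfl⟩
      refine Fin.lastCases ?_ (fun i => ?_) i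
      · left; simp
      · right; exact ⟨i, by simp⟩
    constructor
    · intro H y
      obtain ⟨x, hx⟩ := h.2.2 y
      exact (hk M N v w _ _ (hx.anti (key x y))).1 (H x)
    · intro H x
      obtain ⟨y, hy⟩ := h.2.1 x
      exact (hk M N v w _ _ (hy.anti (key x y))).2 (H y)

/-- The ordered graph of an outcome. -/
def ofSample {n : ℕ} (ω : Sample n) : OG := ⟨Fin n, fun x y => x ≤ y, fun x y => sampleAdj ω x y⟩

theorem sat_ef (ψ : Lle.Sentence) : ∃ k, ∀ {n m : ℕ} (ω : Sample n) (ω' : Sample m),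
    cls k (ofSample ω) = cls k (ofSample ω') → (SatLe ω ψ ↔ SatLe ω' ψ) := by
  obtain ⟨k, hk⟩ := formula_ef ψ
  refine ⟨k, fun {n m} ω ω' h => ?_⟩
  have h0 := hk (ofSample ω) (ofSample ω') default default default default
    ((cls_eq.1 h).anti (by rintro _ ⟨i, _⟩; exact i.elim0))
  have e : ∀ {n : ℕ} (ω : Sample n), leStructure ω = (ofSample ω).str := by
    intro n ω
    unfold leStructure OG.str
    congr 1
  unfold SatLe Language.Sentence.Realize Language.Formula.Realize
  rw [e ω, e ω']
  exact h0

/-! Concatenation of outcomes -/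

/-- Concatenation without edges between the two blocks. -/
def cat {a b : ℕ} (ω : Sample a) (ω' : Sample b) : Sample (a + b) := fun e =>
  if h : e.1.2.val < a then
    ω ⟨(⟨e.1.1.val, lt_trans e.2 h⟩, ⟨e.1.2.val, h⟩), e.2⟩
  else if h' : a ≤ e.1.1.val then
    ω' ⟨(⟨e.1.1.val - a, by omega⟩, ⟨e.1.2.val - a, by omega⟩), by
      have := e.2
      simp only [Fin.lt_def] at this ⊢
      omega⟩
  else false

/-- The weight of a pair. -/
noncomputable def pw2 (p : ℕ → ℝ) {n : ℕ} (ω : Sample n) (i j : Fin n) : ℝ :=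
  if h : i < j then (if ω ⟨(i, j), h⟩ then p (j.val - i.val) else 1 - p (j.val - i.val)) else 1

theorem weight_eq (p : ℕ → ℝ) {n : ℕ} (ω : Sample n) :
    sampleWeight p ω = ∏ i, ∏ j, pw2 p ω i j := by
  rw [← Fintype.prod_prod_type']
  unfold sampleWeight
  have h1 : ∏ x : Fin n × Fin n, pw2 p ω x.1 x.2 =
      ∏ x ∈ Finset.univ.filter (fun x : Fin n × Fin n => x.1 < x.2), pw2 p ω x.1 x.2 := by
    symm
    apply Finset.prod_filter_of_ne
    intro x _ hx
    by_contra h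
    exact hx (by simp [pw2, h])
  rw [h1, Finset.prod_subtype (p := fun x : Fin n × Fin n => x.1 < x.2) _ (by simp)]
  refine Finset.prod_congr rfl fun e _ => ?_
  simp [pw2, e.2]

theorem cat_ll {a b : ℕ} (ω : Sample a) (ω' : Sample b) (i j : Fin a)
    (h : Fin.castAdd b i < Fin.castAdd b j) :
    cat ω ω' ⟨(Fin.castAdd b i, Fin.castAdd b j), h⟩ = ω ⟨(i, j), h⟩ := by
  simp [cat]

theorem cat_rr {a b : ℕ} (ω : Sample a) (ω' : Sample b) (i j : Fin b)
    (h : Fin.natAdd a i < Fin.natAdd a j) :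
    cat ω ω' ⟨(Fin.natAdd a i, Fin.natAdd a j), h⟩ = ω' ⟨(i, j), by simpa using h⟩ := by
  simp [cat]

theorem cat_lr {a b : ℕ} (ω : Sample a) (ω' : Sample b) (i : Fin a) (j : Fin b)
    (h : Fin.castAdd b i < Fin.natAdd a j) :
    cat ω ω' ⟨(Fin.castAdd b i, Fin.natAdd a j), h⟩ = false := by
  simp [cat]

theorem cat_inj {a b : ℕ} {ω₁ ω₂ : Sample a} {ω₁' ω₂' : Sample b}
    (h : cat ω₁ ω₁' = cat ω₂ ω₂') : ω₁ = ω₂ ∧ ω₁' = ω₂' := by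
  constructor
  · funext ⟨⟨i, j⟩, hij⟩
    have hij' : Fin.castAdd b i < Fin.castAdd b j := hij
    rw [← cat_ll ω₁ ω₁' i j hij', h, cat_ll]
  · funext ⟨⟨i, j⟩, hij⟩
    have hij' : Fin.natAdd a i < Fin.natAdd a j := by simpa using hij
    rw [← cat_rr ω₁ ω₁' i j hij', h, cat_rr]

theorem sampleAdj_iff {n : ℕ} (ω : Sample n) (v w : Fin n) : sampleAdj ω v w ↔
    (∃ h : v < w, ω ⟨(v, w), h⟩ = true) ∨ (∃ h : w < v, ω ⟨(w, v), h⟩ = true) := by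
  constructor
  · rintro ⟨⟨⟨i, j⟩, hij⟩, hω, h | h⟩
    · obtain ⟨h1, h2⟩ := h
      obtain rfl := Fin.ext h1
      obtain rfl := Fin.ext h2
      exact Or.inl ⟨hij, hω⟩
    · obtain ⟨h1, h2⟩ := h
      obtain rfl := Fin.ext h1
      obtain rfl := Fin.ext h2
      exact Or.inr ⟨hij, hω⟩
  · rintro (⟨h, hω⟩ | ⟨h, hω⟩)
    · exact ⟨_, hω, Or.inl ⟨rfl, rfl⟩⟩
    · exact ⟨_, hω, Or.inr ⟨rfl, rfl⟩⟩

theorem isIso_cat {a b : ℕ} (ω : Sample a) (ω' : Sample b) :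
    IsIso (M := (ofSample ω).sum (ofSample ω')) (N := ofSample (cat ω ω')) finSumFinEquiv := by
  have lt_lr : ∀ (i : Fin a) (j : Fin b), Fin.castAdd b i < Fin.natAdd a j := by
    intro i j
    simp only [Fin.lt_def, Fin.val_castAdd, Fin.val_natAdd]
    omega
  rintro (x | x) (y | y)
  · refine ⟨Iff.rfl, ?_⟩
    change Fin a at x y
    change sampleAdj ω x y ↔ sampleAdj (cat ω ω') (Fin.castAdd b x) (Fin.castAdd b y)
    rw [sampleAdj_iff, sampleAdj_iff]
    simp only [cat_ll]
    rfl
  · refine ⟨⟨fun _ => (lt_lr x y).le, fun _ => trivial⟩, ?_⟩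
    change Fin a at x
    change Fin b at y
    change False ↔ sampleAdj (cat ω ω') (Fin.castAdd b x) (Fin.natAdd a y)
    rw [sampleAdj_iff]
    simp only [cat_lr, false_iff, not_or, not_exists]
    exact ⟨fun _ => by simp, fun h => absurd h (lt_lr x y).not_gt⟩
  · refine ⟨⟨fun h => h.elim, fun h => absurd h (not_le.2 (lt_lr y x))⟩, ?_⟩
    change Fin b at x
    change Fin a at y
    change False ↔ sampleAdj (cat ω ω') (Fin.natAdd a x) (Fin.castAdd b y)
    rw [sampleAdj_iff]
    simp only [cat_lr, false_iff, not_or, not_exists]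
    exact ⟨fun h => absurd h (lt_lr y x).not_gt, fun _ => by simp⟩
  · have hle : ∀ u v : Fin b, Fin.natAdd a u ≤ Fin.natAdd a v ↔ u ≤ v := by simp
    refine ⟨(hle x y).symm, ?_⟩
    change Fin b at x y
    change sampleAdj ω' x y ↔ sampleAdj (cat ω ω') (Fin.natAdd a x) (Fin.natAdd a y)
    rw [sampleAdj_iff, sampleAdj_iff]
    simp only [cat_rr, Fin.natAdd_lt_natAdd_iff]

/-- Probability of no edge between the blocks. -/
noncomputable def cross (p : ℕ → ℝ) (a b : ℕ) : ℝ :=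
  ∏ i : Fin a, ∏ j : Fin b, (1 - p (a + j.val - i.val))

theorem weight_cat (p : ℕ → ℝ) {a b : ℕ} (ω : Sample a) (ω' : Sample b) :
    sampleWeight p (cat ω ω') = sampleWeight p ω * sampleWeight p ω' * cross p a b := by
  have lt_lr : ∀ (i : Fin a) (j : Fin b), Fin.castAdd b i < Fin.natAdd a j := by
    intro i j
    simp only [Fin.lt_def, Fin.val_castAdd, Fin.val_natAdd]
    omega
  have e1 : ∀ i j : Fin a, pw2 p (cat ω ω') (Fin.castAdd b i) (Fin.castAdd b j) = pw2 p ω i j := by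
    intro i j
    unfold pw2
    simp only [cat_ll]
    rfl
  have e2 : ∀ (i : Fin a) (j : Fin b), pw2 p (cat ω ω') (Fin.castAdd b i) (Fin.natAdd a j) =
      1 - p (a + j.val - i.val) := by
    intro i j
    unfold pw2
    rw [dif_pos (lt_lr i j), cat_lr]
    simp
  have e3 : ∀ (i : Fin a) (j : Fin b), pw2 p (cat ω ω') (Fin.natAdd a j) (Fin.castAdd b i) = 1 := by
    intro i j
    unfold pw2
    rw [dif_neg (lt_lr i j).not_gt]
  have e4 : ∀ i j : Fin b, pw2 p (cat ω ω') (Fin.natAdd a i) (Fin.natAdd a j) = pw2 p ω' i j := by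
    intro i j
    unfold pw2
    simp only [cat_rr, Fin.natAdd_lt_natAdd_iff, Fin.val_natAdd, Nat.add_sub_add_left]
  rw [weight_eq, weight_eq, weight_eq]
  simp only [Fin.prod_univ_add, e1, e2, e3, e4, Finset.prod_const_one, one_mul,
    Finset.prod_mul_distrib, cross]
  ring

theorem weight_nonneg {p : ℕ → ℝ} (hp : ∀ i, 0 ≤ p i ∧ p i < 1) {n : ℕ} (ω : Sample n) :
    0 ≤ sampleWeight p ω := by
  unfold sampleWeight
  refine Finset.prod_nonneg fun e _ => ?_
  have := hp (e.1.2.val - e.1.1.val)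
  split_ifs <;> linarith

theorem weight_sum (p : ℕ → ℝ) (n : ℕ) : ∑ ω : Sample n, sampleWeight p ω = 1 := by
  have h := Finset.prod_univ_sum (ι := EdgeIdx n) (κ := fun _ => Bool) (R := ℝ)
    (fun _ => Finset.univ)
    (fun e b => if b then p (e.1.2.val - e.1.1.val) else 1 - p (e.1.2.val - e.1.1.val))
  rw [Fintype.piFinset_univ] at h
  unfold sampleWeight
  rw [← h]
  simp

theorem prod_ge {p : ℕ → ℝ} (hp : ∀ i, 0 ≤ p i ∧ p i < 1) {c : ℝ}
    (hc : ∀ n : ℕ, c ≤ ∏ i ∈ Finset.Icc 1 n, (1 - p i)) {k : ℕ} (f : Fin k → ℕ)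
    (hf : Function.Injective f) (hf1 : ∀ i, 1 ≤ f i) : c ≤ ∏ i, (1 - p (f i)) := by
  classical
  have h1 : ∏ i, (1 - p (f i)) = ∏ d ∈ Finset.univ.image f, (1 - p d) := by
    rw [Finset.prod_image (fun x _ y _ h => hf h)]
  obtain ⟨n, hn⟩ : ∃ n, ∀ i, f i ≤ n :=
    ⟨∑ i, f i, fun i => Finset.single_le_sum (f := f) (fun _ _ => Nat.zero_le _)
      (Finset.mem_univ i)⟩
  have hsub : Finset.univ.image f ⊆ Finset.Icc 1 n := by
    intro d hd
    simp only [Finset.mem_image, Finset.mem_univ, true_and] at hd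
    obtain ⟨i, rfl⟩ := hd
    exact Finset.mem_Icc.2 ⟨hf1 i, hn i⟩
  rw [h1]
  refine (hc n).trans ?_
  rw [← Finset.prod_sdiff hsub]
  refine mul_le_of_le_one_left (Finset.prod_nonneg fun d _ => by linarith [hp d]) ?_
  exact Finset.prod_le_one (fun d _ => by linarith [hp d]) (fun d _ => by linarith [hp d])

theorem cross_ge_left {p : ℕ → ℝ} (hp : ∀ i, 0 ≤ p i ∧ p i < 1) {c : ℝ} (hc0 : 0 < c)
    (hc : ∀ n : ℕ, c ≤ ∏ i ∈ Finset.Icc 1 n, (1 - p i)) (a b : ℕ) : c ^ a ≤ cross p a b := by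
  unfold cross
  calc c ^ a = ∏ _i : Fin a, c := by simp
    _ ≤ _ := by
      refine Finset.prod_le_prod (fun _ _ => hc0.le) fun i _ => ?_
      refine prod_ge hp hc (fun j : Fin b => a + j.val - i.val) ?_ ?_
      · intro x y h
        simp only at h
        ext
        omega
      · intro j
        have := i.isLt
        omega

theorem cross_ge_right {p : ℕ → ℝ} (hp : ∀ i, 0 ≤ p i ∧ p i < 1) {c : ℝ} (hc0 : 0 < c)
    (hc : ∀ n : ℕ, c ≤ ∏ i ∈ Finset.Icc 1 n, (1 - p i)) (a b : ℕ) : c ^ b ≤ cross p a b := by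
  unfold cross
  rw [Finset.prod_comm]
  calc c ^ b = ∏ _i : Fin b, c := by simp
    _ ≤ _ := by
      refine Finset.prod_le_prod (fun _ _ => hc0.le) fun j _ => ?_
      refine prod_ge hp hc (fun i : Fin a => a + j.val - i.val) ?_ ?_
      · intro x y h
        simp only at h
        ext
        omega
      · intro i
        have := i.isLt
        omega

/-- Classes of outcomes of positive probability. -/
def goodSub {p : ℕ → ℝ} (hp : ∀ i, 0 ≤ p i ∧ p i < 1) {c : ℝ} (hc0 : 0 < c)
    (hc : ∀ n : ℕ, c ≤ ∏ i ∈ Finset.Icc 1 n, (1 - p i)) (k : ℕ) : Submonoid (Cls k) where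
  carrier := {x | ∃ n, ∃ ω : Sample n, 0 < sampleWeight p ω ∧ x = cls k (ofSample ω)}
  one_mem' := by
    refine ⟨0, fun _ => false, ?_, ?_⟩
    · rw [weight_eq]; simp
    · refine IsIso.cls_eq (M := OG.zero) (N := ofSample _) (f := (Equiv.equivOfIsEmpty Empty (Fin 0))) ?_
      rintro ⟨⟩
  mul_mem' := by
    rintro x y ⟨n, ω, h, rfl⟩ ⟨m, ω', h', rfl⟩
    refine ⟨n + m, cat ω ω', ?_, ?_⟩
    · rw [weight_cat]
      exact mul_pos (mul_pos h h') ((pow_pos hc0 n).trans_le (cross_ge_left hp hc0 hc n m))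
    · rw [← cls_sum]
      exact (isIso_cat ω ω').cls_eq

theorem exists_atom {p : ℕ → ℝ} (hp : ∀ i, 0 ≤ p i ∧ p i < 1) {c : ℝ} (hc0 : 0 < c)
    (hc : ∀ n : ℕ, c ≤ ∏ i ∈ Finset.Icc 1 n, (1 - p i)) (k : ℕ) :
    ∃ a, ∃ A : Sample a, 0 < sampleWeight p A ∧ ∀ b, ∀ t : Sample b, 0 < sampleWeight p t →
      cls k (ofSample (cat A (cat t A))) = cls k (ofSample A) := by
  obtain ⟨⟨z, a, A, hA, rfl⟩, hz⟩ := exists_rect (S := goodSub hp hc0 hc k) (2 ^ k)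
    (fun x => Subtype.ext (Cls_aper k x.1))
  refine ⟨a, A, hA, fun b t ht => ?_⟩
  have h := congrArg Subtype.val (hz ⟨_, b, t, ht, rfl⟩)
  change cls k (ofSample A) * cls k (ofSample t) * cls k (ofSample A) = cls k (ofSample A) at h
  rw [← (isIso_cat A (cat t A)).cls_eq, cls_sum, ← (isIso_cat t A).cls_eq, cls_sum, ← mul_assoc, h]

theorem Pr_ge {p : ℕ → ℝ} (hp : ∀ i, 0 ≤ p i ∧ p i < 1) {c : ℝ} (hc0 : 0 < c)
    (hc : ∀ n : ℕ, c ≤ ∏ i ∈ Finset.Icc 1 n, (1 - p i)) {a b : ℕ} (A : Sample a)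
    (P : Sample (a + (b + a)) → Prop)
    (hP : ∀ t : Sample b, 0 < sampleWeight p t → P (cat A (cat t A))) :
    (sampleWeight p A) ^ 2 * (c ^ a) ^ 2 ≤ Pr p (a + (b + a)) P := by
  classical
  have hinj : Function.Injective fun t : Sample b => cat A (cat t A) :=
    fun t t' h => (cat_inj (cat_inj h).2).1
  have hA := weight_nonneg hp A
  have hca : 0 < c ^ a := pow_pos hc0 a
  calc (sampleWeight p A) ^ 2 * (c ^ a) ^ 2
      = ∑ t : Sample b, (sampleWeight p A) ^ 2 * (c ^ a) ^ 2 * sampleWeight p t := by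
        rw [← Finset.mul_sum, weight_sum, mul_one]
    _ ≤ ∑ t : Sample b, (if P (cat A (cat t A)) then sampleWeight p (cat A (cat t A)) else 0) := by
        refine Finset.sum_le_sum fun t _ => ?_
        rcases (weight_nonneg hp t).eq_or_lt with h | h
        · rw [← h, mul_zero]
          split_ifs
          · exact weight_nonneg hp _
          · exact le_rfl
        · rw [if_pos (hP t h), weight_cat, weight_cat]
          have h1 := cross_ge_left hp hc0 hc a (b + a)
          have h2 := cross_ge_right hp hc0 hc b a
          have h3 : c ^ a * c ^ a ≤ cross p a (b + a) * cross p b a :=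
            mul_le_mul h1 h2 hca.le (hca.le.trans h1)
          calc _ = (sampleWeight p A ^ 2 * sampleWeight p t) * (c ^ a * c ^ a) := by ring
            _ ≤ (sampleWeight p A ^ 2 * sampleWeight p t) *
                (cross p a (b + a) * cross p b a) :=
              mul_le_mul_of_nonneg_left h3 (by positivity)
            _ = _ := by ring
    _ = ∑ ω ∈ Finset.univ.image (fun t : Sample b => cat A (cat t A)),
          (if P ω then sampleWeight p ω else 0) := by
        rw [Finset.sum_image (fun x _ y _ h => hinj h)]
    _ ≤ ∑ ω, (if P ω then sampleWeight p ω else 0) := by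
        refine Finset.sum_le_sum_of_subset_of_nonneg (Finset.subset_univ _) fun ω _ _ => ?_
        split_ifs
        · exact weight_nonneg hp _
        · exact le_rfl
    _ = Pr p (a + (b + a)) P := by
        unfold Pr
        exact Finset.sum_congr rfl fun ω _ => by congr

theorem Pr_nonneg {p : ℕ → ℝ} (hp : ∀ i, 0 ≤ p i ∧ p i < 1) (n : ℕ) (P : Sample n → Prop) :
    0 ≤ Pr p n P := by
  unfold Pr
  refine Finset.sum_nonneg fun ω _ => ?_
  split_ifs
  · exact weight_nonneg hp _
  · exact le_rfl

theorem Pr_compl (p : ℕ → ℝ) (n : ℕ) (P : Sample n → Prop) :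
    Pr p n P + Pr p n (fun ω => ¬ P ω) = 1 := by
  unfold Pr
  rw [← Finset.sum_add_distrib, ← weight_sum p n]
  refine Finset.sum_congr rfl fun ω _ => ?_
  by_cases h : P ω <;> simp [h]

/-- If `0 ≤ p i < 1` and `∏_{i=1}^∞ (1 - p i) > 0`, then for every
sentence `ψ` of `L≤`, `limsup Prob(n, p̄; ψ) - liminf Prob(n, p̄; ψ) < 1`. -/
theorem statement_10 (p : ℕ → ℝ) (hp : ∀ i, 0 ≤ p i ∧ p i < 1)
    (hprod : ∃ c : ℝ, 0 < c ∧ ∀ n : ℕ, c ≤ ∏ i ∈ Finset.Icc 1 n, (1 - p i))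
    (ψ : Lle.Sentence) :
    limsup (fun n => ProbLe p n ψ) atTop - liminf (fun n => ProbLe p n ψ) atTop < 1 := by
  obtain ⟨c, hc0, hc⟩ := hprod
  obtain ⟨k, hk⟩ := sat_ef ψ
  obtain ⟨a, A, hA, hz⟩ := exists_atom hp hc0 hc k
  set δ := (sampleWeight p A) ^ 2 * (c ^ a) ^ 2 with hδ
  have hδ0 : 0 < δ := by positivity
  have h0 : ∀ n, 0 ≤ ProbLe p n ψ := fun n => Pr_nonneg hp n _
  have h1 : ∀ n, ProbLe p n ψ ≤ 1 := fun n => by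
    have := Pr_compl p n (fun ω => SatLe ω ψ)
    have h2 := Pr_nonneg hp n (fun ω => ¬ SatLe ω ψ)
    unfold ProbLe
    linarith
  have bb : IsBoundedUnder (· ≥ ·) atTop (fun n => ProbLe p n ψ) := isBoundedUnder_of ⟨0, h0⟩
  have ba : IsBoundedUnder (· ≤ ·) atTop (fun n => ProbLe p n ψ) := isBoundedUnder_of ⟨1, h1⟩
  by_cases hs : SatLe A ψ
  · have hl : ∀ n, a + a ≤ n → δ ≤ ProbLe p n ψ := by
      intro n hn
      obtain ⟨b, rfl⟩ : ∃ b, n = a + (b + a) := ⟨n - (a + a), by omega⟩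
      exact Pr_ge hp hc0 hc A _ fun t ht => (hk _ _ (hz b t ht)).2 hs
    have e1 : δ ≤ liminf (fun n => ProbLe p n ψ) atTop :=
      le_liminf_of_le ba.isCoboundedUnder_ge (eventually_atTop.2 ⟨a + a, hl⟩)
    have e2 : limsup (fun n => ProbLe p n ψ) atTop ≤ 1 :=
      limsup_le_of_le bb.isCoboundedUnder_le (Eventually.of_forall h1)
    linarith
  · have hl : ∀ n, a + a ≤ n → ProbLe p n ψ ≤ 1 - δ := by
      intro n hn
      obtain ⟨b, rfl⟩ : ∃ b, n = a + (b + a) := ⟨n - (a + a), by omega⟩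
      have := Pr_ge hp hc0 hc A (b := b) (fun ω => ¬ SatLe ω ψ)
        fun t ht => fun h => hs ((hk _ _ (hz b t ht)).1 h)
      have h2 := Pr_compl p (a + (b + a)) (fun ω => SatLe ω ψ)
      unfold ProbLe
      linarith
    have e1 : 0 ≤ liminf (fun n => ProbLe p n ψ) atTop :=
      le_liminf_of_le ba.isCoboundedUnder_ge (Eventually.of_forall h0)
    have e2 : limsup (fun n => ProbLe p n ψ) atTop ≤ 1 - δ :=
      limsup_le_of_le bb.isCoboundedUnder_le (eventually_atTop.2 ⟨a + a, hl⟩)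
    linarith

end RandomGraph
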